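/- Suppose n > 2r. Define the lower confidence bound L_{n,r}(x) = θ̂_r^{GT}(X_n) − [√(2/C(n,2r)) + 2√2/C(n,r)]·√(C_{n,r}·x) − [4/√C(n,2r) + (26/3)/C(n,r) + 16r/C(n,r+1)]·x − (2r/C(n,r+1))·C_{n,r}, where C(n,k) denotes the binomial coefficient. Then for every x > 0, with probability at least 1 − 6e^{−x} under P, θ_r(P;X_n) ≥ max(0, L_{n,r}(x)). -/

import Mathlib

open MeasureTheory ProbabilityTheory Real Filter

noncomputable section

/-- The law of an i.i.d. sample of size `n` from the discrete distribution `P` on `ℕ`. -/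
def sampleMeasure (P : PMF ℕ) (n : ℕ) : Measure (Fin n → ℕ) :=
  Measure.pi fun _ => P.toMeasure

/-- The probability mass of symbol `j` under `P`, as a real number. -/
def pReal (P : PMF ℕ) (j : ℕ) : ℝ := (P j).toReal

/-- Empirical frequency of the symbol `j` in the sample `ω`. -/
def freq {n : ℕ} (ω : Fin n → ℕ) (j : ℕ) : ℕ :=
  (Finset.univ.filter fun i => ω i = j).card

/-- The `r`-order missing mass `θ_r(P; X_n)`. -/
def missingMass (p : ℕ → ℝ) (r : ℕ) {n : ℕ} (ω : Fin n → ℕ) : ℝ :=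
  ∑' j, p j ^ r * (if freq ω j = 0 then 1 else 0)

/-- `M_{n,r}`: the number of distinct symbols appearing exactly `r` times in the sample. -/
def Mcount {n : ℕ} (ω : Fin n → ℕ) (r : ℕ) : ℝ :=
  ∑' j, if freq ω j = r then 1 else 0

/-- `C_{n,r}`: the number of distinct symbols appearing at least `r` times in the sample. -/
def Ccount {n : ℕ} (ω : Fin n → ℕ) (r : ℕ) : ℝ :=
  ∑' j, if r ≤ freq ω j then 1 else 0

/-- The Good–Turing-type estimator `θ̂_r^{GT}(X_n) = M_{n,r} / (n choose r)`. -/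
def gtEst {n : ℕ} (ω : Fin n → ℕ) (r : ℕ) : ℝ := Mcount ω r / (n.choose r)

/-- The lower confidence bound `𝔏_{n,r}(x)`. -/
def Lbound {n : ℕ} (r : ℕ) (x : ℝ) (ω : Fin n → ℕ) : ℝ :=
  gtEst ω r
    - (Real.sqrt (2 / (n.choose (2 * r))) + 2 * Real.sqrt 2 / (n.choose r))
        * Real.sqrt (Ccount ω r * x)
    - (4 / Real.sqrt (n.choose (2 * r)) + (26 / 3) / (n.choose r)
        + 16 * r / (n.choose (r + 1))) * x
    - (2 * r / (n.choose (r + 1))) * Ccount ω r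

/-! ### Basic facts on the sample measure -/

instance sampleMeasure_isProb (P : PMF ℕ) (n : ℕ) : IsProbabilityMeasure (sampleMeasure P n) := by
  unfold sampleMeasure; infer_instance

/-- Expectation of a function of the vector of counts. -/
def Ec (P : PMF ℕ) (n : ℕ) (f : (ℕ → ℕ) → ℝ) : ℝ := ∫ ω, f (freq ω) ∂(sampleMeasure P n)

def Bdd (f : (ℕ → ℕ) → ℝ) : Prop := ∃ B, ∀ y, |f y| ≤ B

lemma integrable_of_bdd {n : ℕ} (P : PMF ℕ) (F : (Fin n → ℕ) → ℝ) (B : ℝ) (h : ∀ ω, |F ω| ≤ B) :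
    Integrable F (sampleMeasure P n) :=
  Integrable.of_bound (Measurable.of_discrete).aestronglyMeasurable B
    (Eventually.of_forall fun ω => by simpa using h ω)

lemma integrable_P (P : PMF ℕ) (F : ℕ → ℝ) (B : ℝ) (h : ∀ ω, |F ω| ≤ B) :
    Integrable F P.toMeasure :=
  Integrable.of_bound (Measurable.of_discrete).aestronglyMeasurable B
    (Eventually.of_forall fun ω => by simpa using h ω)

lemma freq_cons {n : ℕ} (k : ℕ) (ω : Fin n → ℕ) :
    freq (Fin.cons k ω : Fin (n+1) → ℕ) = freq ω + Pi.single k 1 := by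
  funext j
  simp only [freq, Pi.add_apply, Finset.card_filter, Fin.sum_univ_succ, Fin.cons_zero,
    Fin.cons_succ, Pi.single_apply]
  rw [add_comm]
  simp [eq_comm]

lemma Bdd.integrable {f : (ℕ → ℕ) → ℝ} (h : Bdd f) (P : PMF ℕ) (n : ℕ) :
    Integrable (fun ω => f (freq ω)) (sampleMeasure P n) := by
  obtain ⟨B, hB⟩ := h
  exact integrable_of_bdd P _ B fun ω => hB _

lemma Ec_succ (P : PMF ℕ) (n : ℕ) (f : (ℕ → ℕ) → ℝ) (hf : Bdd f) :
    Ec P (n+1) f = ∫ k, Ec P n (fun y => f (y + Pi.single k 1)) ∂P.toMeasure := by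
  obtain ⟨B, hB⟩ := hf
  have h := (measurePreserving_piFinSuccAbove (n := n) (fun _ : Fin (n+1) => P.toMeasure) 0).symm
  have h2 := h.integral_comp (MeasurableEquiv.measurableEmbedding _)
    (fun ω : Fin (n+1) → ℕ => f (freq ω))
  unfold Ec sampleMeasure
  rw [← h2, integral_prod]
  · simp only [← freq_cons]
    have e : ∀ (k : ℕ) (ω : Fin n → ℕ),
        (MeasurableEquiv.piFinSuccAbove (fun _ : Fin (n+1) => ℕ) 0).symm (k, ω) =
          Fin.cons k ω := by
      intro k ω
      funext i
      refine Fin.cases ?_ (fun i => ?_) i <;> simp [MeasurableEquiv.piFinSuccAbove]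
    simp only [e]
  · exact Integrable.of_bound (Measurable.of_discrete).aestronglyMeasurable B
      (Eventually.of_forall fun ω => by simpa using hB _)

lemma Ec_zero (P : PMF ℕ) (f : (ℕ → ℕ) → ℝ) : Ec P 0 f = f 0 := by
  have : ∀ ω : Fin 0 → ℕ, freq ω = 0 := by
    intro ω; funext j; simp [freq]
  simp [Ec, this]

lemma Ec_mono (P : PMF ℕ) (n : ℕ) {f g : (ℕ → ℕ) → ℝ} (hf : Bdd f) (hg : Bdd g)
    (h : ∀ y, f y ≤ g y) : Ec P n f ≤ Ec P n g :=
  integral_mono (hf.integrable P n) (hg.integrable P n) fun ω => h _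

lemma Bdd.shift {f : (ℕ → ℕ) → ℝ} (h : Bdd f) (k : ℕ) :
    Bdd (fun y => f (y + Pi.single k 1)) := by
  obtain ⟨B, hB⟩ := h
  exact ⟨B, fun y => hB _⟩

lemma Bdd.mul {f g : (ℕ → ℕ) → ℝ} (hf : Bdd f) (hg : Bdd g) : Bdd (fun y => f y * g y) := by
  obtain ⟨B, hB⟩ := hf
  obtain ⟨C, hC⟩ := hg
  refine ⟨B * C, fun y => ?_⟩
  rw [abs_mul]
  exact mul_le_mul (hB y) (hC y) (abs_nonneg _) ((abs_nonneg _).trans (hB y))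

lemma Ec_abs_le (P : PMF ℕ) (n : ℕ) {f : (ℕ → ℕ) → ℝ} {B : ℝ} (hB : ∀ y, |f y| ≤ B) :
    |Ec P n f| ≤ B := by
  have := norm_integral_le_of_norm_le_const (μ := sampleMeasure P n) (C := B)
    (f := fun ω => f (freq ω)) (Eventually.of_forall fun ω => by simpa using hB _)
  simpa [Ec] using this

lemma Ec_shift_integrable (P : PMF ℕ) (n : ℕ) {f : (ℕ → ℕ) → ℝ} (hf : Bdd f) :
    Integrable (fun k => Ec P n (fun y => f (y + Pi.single k 1))) P.toMeasure := by
  obtain ⟨B, hB⟩ := hf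
  exact integrable_P P _ B fun k => Ec_abs_le P n fun y => hB _

/-- Negative association of the counts. -/
lemma neg_assoc (P : PMF ℕ) (n : ℕ) : ∀ (f g : (ℕ → ℕ) → ℝ), Bdd f → Bdd g →
    (∀ k y, f y ≤ f (y + Pi.single k 1)) → (∀ k y, g y ≤ g (y + Pi.single k 1)) →
    (∀ k, (∀ y, f (y + Pi.single k 1) = f y) ∨ (∀ y, g (y + Pi.single k 1) = g y)) →
    Ec P n (fun y => f y * g y) ≤ Ec P n f * Ec P n g := by
  induction n with
  | zero => intro f g _ _ _ _ _; simp [Ec_zero]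
  | succ n ih =>
    intro f g hf hg mf mg hd
    rw [Ec_succ P n _ (hf.mul hg), Ec_succ P n f hf, Ec_succ P n g hg]
    have If := Ec_shift_integrable P n hf
    have Ig := Ec_shift_integrable P n hg
    have h0f : ∀ k, Ec P n f ≤ Ec P n (fun y => f (y + Pi.single k 1)) := fun k =>
      Ec_mono P n hf (hf.shift k) (mf k)
    have h0g : ∀ k, Ec P n g ≤ Ec P n (fun y => g (y + Pi.single k 1)) := fun k =>
      Ec_mono P n hg (hg.shift k) (mg k)
    have key : ∀ k, Ec P n (fun y => f (y + Pi.single k 1) * g (y + Pi.single k 1)) ≤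
        Ec P n f * Ec P n (fun y => g (y + Pi.single k 1))
        + Ec P n (fun y => f (y + Pi.single k 1)) * Ec P n g - Ec P n f * Ec P n g := by
      intro k
      have h1 := ih (fun y => f (y + Pi.single k 1)) (fun y => g (y + Pi.single k 1))
        (hf.shift k) (hg.shift k)
        (fun m y => by
          have := mf m (y + Pi.single k 1)
          rwa [add_right_comm] at this)
        (fun m y => by
          have := mg m (y + Pi.single k 1)
          rwa [add_right_comm] at this)
        (fun m => by
          rcases hd m with h | h
          · left; intro y; rw [add_right_comm, h]
          · right; intro y; rw [add_right_comm, h])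
      rcases hd k with h | h
      · simp only [h] at h1 ⊢
        linarith
      · simp only [h] at h1 ⊢
        linarith
    set a0 := Ec P n f
    set b0 := Ec P n g
    have hI := integral_mono (Ec_shift_integrable P n (hf.mul hg))
      (((Ig.const_mul a0).add (If.mul_const b0)).sub (integrable_const (a0 * b0))) key
    refine hI.trans ?_
    have e1 : ∫ k, (a0 * Ec P n (fun y => g (y + Pi.single k 1))
        + Ec P n (fun y => f (y + Pi.single k 1)) * b0 - a0 * b0) ∂P.toMeasure =
        a0 * ∫ k, Ec P n (fun y => g (y + Pi.single k 1)) ∂P.toMeasure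
        + (∫ k, Ec P n (fun y => f (y + Pi.single k 1)) ∂P.toMeasure) * b0 - a0 * b0 := by
      have hh := integral_sub ((Ig.const_mul a0).add (If.mul_const b0))
        (integrable_const (μ := P.toMeasure) (a0 * b0))
      simp only [Pi.add_apply] at hh
      rw [hh, integral_add (Ig.const_mul a0) (If.mul_const b0), integral_const_mul,
        integral_mul_const]
      simp
    refine e1.le.trans ?_
    have hA : a0 ≤ ∫ k, Ec P n (fun y => f (y + Pi.single k 1)) ∂P.toMeasure := by
      have := integral_mono (integrable_const a0) If h0f
      simpa using this
    have hB : b0 ≤ ∫ k, Ec P n (fun y => g (y + Pi.single k 1)) ∂P.toMeasure := by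
      have := integral_mono (integrable_const b0) Ig h0g
      simpa using this
    nlinarith [mul_nonneg (sub_nonneg.2 hA) (sub_nonneg.2 hB)]

lemma Bdd.neg {f : (ℕ → ℕ) → ℝ} (h : Bdd f) : Bdd (fun y => - f y) := by
  obtain ⟨B, hB⟩ := h
  exact ⟨B, fun y => by rw [abs_neg]; exact hB y⟩

lemma neg_assoc' (P : PMF ℕ) (n : ℕ) (f g : (ℕ → ℕ) → ℝ) (hf : Bdd f) (hg : Bdd g)
    (mf : ∀ k y, f (y + Pi.single k 1) ≤ f y) (mg : ∀ k y, g (y + Pi.single k 1) ≤ g y)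
    (hd : ∀ k, (∀ y, f (y + Pi.single k 1) = f y) ∨ (∀ y, g (y + Pi.single k 1) = g y)) :
    Ec P n (fun y => f y * g y) ≤ Ec P n f * Ec P n g := by
  have := neg_assoc P n (fun y => - f y) (fun y => - g y) hf.neg hg.neg
    (fun k y => neg_le_neg (mf k y)) (fun k y => neg_le_neg (mg k y))
    (fun k => by
      rcases hd k with h | h
      · left; intro y; simp only [h]
      · right; intro y; simp only [h])
  simpa [Ec, integral_neg] using this

lemma Bdd.prod {h : ℕ → ℕ → ℝ} (hb : ∀ j, ∃ B, ∀ m, |h j m| ≤ B) (S : Finset ℕ) :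
    Bdd (fun y => ∏ j ∈ S, h j (y j)) := by
  classical
  induction S using Finset.induction_on with
  | empty => exact ⟨1, fun y => by simp⟩
  | insert a S ha ih =>
    simp only [Finset.prod_insert ha]
    refine Bdd.mul (f := fun y => h a (y a)) ?_ ih
    obtain ⟨B, hB⟩ := hb a
    exact ⟨B, fun y => hB _⟩

lemma neg_assoc_prod (P : PMF ℕ) (n : ℕ) (h : ℕ → ℕ → ℝ) (hb : ∀ j, ∃ B, ∀ m, |h j m| ≤ B)
    (h0 : ∀ j m, 0 ≤ h j m) (hm : (∀ j, Monotone (h j)) ∨ (∀ j, Antitone (h j)))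
    (S : Finset ℕ) :
    Ec P n (fun y => ∏ j ∈ S, h j (y j)) ≤ ∏ j ∈ S, Ec P n (fun y => h j (y j)) := by
  classical
  induction S using Finset.induction_on with
  | empty => simp [Ec]
  | insert a S ha ih =>
    simp only [Finset.prod_insert ha]
    have hba : Bdd (fun y => h a (y a)) := by
      obtain ⟨B, hB⟩ := hb a
      exact ⟨B, fun y => hB _⟩
    have hd : ∀ k, (∀ y : ℕ → ℕ, h a ((y + Pi.single k 1 : ℕ → ℕ) a) = h a (y a)) ∨
        (∀ y : ℕ → ℕ, ∏ j ∈ S, h j ((y + Pi.single k 1 : ℕ → ℕ) j) = ∏ j ∈ S, h j (y j)) := by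
      intro k
      by_cases hk : k = a
      · right
        intro y
        refine Finset.prod_congr rfl fun j hj => ?_
        have : j ≠ k := by rintro rfl; subst hk; exact ha hj
        simp [Pi.single_apply, this]
      · left; intro y; simp [Pi.single_apply, Ne.symm hk]
    have hle : ∀ (k : ℕ) (y : ℕ → ℕ) (j : ℕ), y j ≤ (y + Pi.single k 1 : ℕ → ℕ) j := by
      intro k y j; simp
    have key : Ec P n (fun y => h a (y a) * ∏ j ∈ S, h j (y j)) ≤
        Ec P n (fun y => h a (y a)) * Ec P n (fun y => ∏ j ∈ S, h j (y j)) := by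
      rcases hm with hm | hm
      · exact neg_assoc P n (fun y => h a (y a)) (fun y => ∏ j ∈ S, h j (y j)) hba
          (Bdd.prod hb S) (fun k y => hm a (hle k y a))
          (fun k y => Finset.prod_le_prod (fun j _ => h0 j _) fun j _ => hm j (hle k y j)) hd
      · exact neg_assoc' P n (fun y => h a (y a)) (fun y => ∏ j ∈ S, h j (y j)) hba
          (Bdd.prod hb S) (fun k y => hm a (hle k y a))
          (fun k y => Finset.prod_le_prod (fun j _ => h0 j _) fun j _ => hm j (hle k y j)) hd
    refine key.trans (mul_le_mul_of_nonneg_left ih ?_)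
    exact integral_nonneg fun ω => h0 _ _

/-- probability that the count of `j` lies in `s`. -/
def qs (P : PMF ℕ) (n : ℕ) (s : Set ℕ) (j : ℕ) : ℝ :=
  Ec P n (fun y => s.indicator 1 (y j))

lemma ind_bdd (s : Set ℕ) (j : ℕ) : Bdd (fun y => s.indicator (1 : ℕ → ℝ) (y j)) :=
  ⟨1, fun y => by by_cases h : y j ∈ s <;> simp [h]⟩

lemma qs_nonneg (P : PMF ℕ) (n : ℕ) (s : Set ℕ) (j : ℕ) : 0 ≤ qs P n s j :=
  integral_nonneg fun ω => Set.indicator_nonneg (fun _ _ => zero_le_one) _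

lemma mgf_finite (P : PMF ℕ) (n : ℕ) (s : Set ℕ) (c : ℕ → ℝ)
    (hm : ((∀ j, 0 ≤ c j) ∧ IsUpperSet s) ∨ ((∀ j, c j ≤ 0) ∧ IsUpperSet s) ∨
      ((∀ j, c j ≤ 0) ∧ IsLowerSet s)) (S : Finset ℕ) :
    Ec P n (fun y => Real.exp (∑ j ∈ S, c j * s.indicator 1 (y j))) ≤
      Real.exp (∑ j ∈ S, (Real.exp (c j) - 1) * qs P n s j) := by
  classical
  simp only [Real.exp_sum]
  have hv : ∀ j m, Real.exp (c j * s.indicator 1 m) = 1 + (Real.exp (c j) - 1) * s.indicator 1 m := by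
    intro j m
    by_cases h : m ∈ s <;> simp [h]
  refine (neg_assoc_prod P n (fun j m => Real.exp (c j * s.indicator 1 m)) ?_ ?_ ?_ S).trans ?_
  · intro j
    refine ⟨1 + Real.exp (c j), fun m => ?_⟩
    rw [abs_of_pos (Real.exp_pos _)]
    have := Real.exp_pos (c j)
    by_cases h : m ∈ s <;> simp [h] <;> linarith
  · intro j m; positivity
  · have hup : IsUpperSet s → Monotone (s.indicator (1 : ℕ → ℝ)) := by
      intro hs a b hab
      by_cases ha : a ∈ s
      · simp [ha, hs hab ha]
      · simp only [ha, not_false_eq_true, Set.indicator_of_notMem]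
        exact Set.indicator_nonneg (fun _ _ => zero_le_one) _
    have hlo : IsLowerSet s → Antitone (s.indicator (1 : ℕ → ℝ)) := by
      intro hs a b hab
      by_cases ha : b ∈ s
      · simp [ha, hs hab ha]
      · simp only [ha, not_false_eq_true, Set.indicator_of_notMem]
        exact Set.indicator_nonneg (fun _ _ => zero_le_one) _
    rcases hm with ⟨h1, h2⟩ | ⟨h1, h2⟩ | ⟨h1, h2⟩
    · left; intro j a b hab
      exact Real.exp_le_exp.2 (mul_le_mul_of_nonneg_left (hup h2 hab) (h1 j))
    · right; intro j a b hab
      exact Real.exp_le_exp.2 (mul_le_mul_of_nonpos_left (hup h2 hab) (h1 j))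
    · left; intro j a b hab
      exact Real.exp_le_exp.2 (mul_le_mul_of_nonpos_left (hlo h2 hab) (h1 j))
  · refine Finset.prod_le_prod (fun j _ => integral_nonneg fun ω => (Real.exp_pos _).le) ?_
    intro j _
    have : Ec P n (fun y => Real.exp (c j * s.indicator 1 (y j))) =
        (Real.exp (c j) - 1) * qs P n s j + 1 := by
      simp only [hv, qs, Ec]
      rw [integral_add (integrable_const _) (((ind_bdd s j).integrable P n).const_mul _),
        integral_const_mul]
      simp [add_comm]
    rw [this]
    exact Real.add_one_le_exp _

/-! ### Binomial probabilities -/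

lemma integral_ite_P (P : PMF ℕ) (j : ℕ) (a b : ℝ) :
    ∫ m, (if m = j then a else b) ∂P.toMeasure = pReal P j * a + (1 - pReal P j) * b := by
  have h1 : ∀ m : ℕ, (if m = j then a else b) = ({j} : Set ℕ).indicator (fun _ => a - b) m + b := by
    intro m
    by_cases h : m = j <;> simp [h]
  simp only [h1]
  rw [integral_add ((integrable_const _).indicator (by measurability)) (integrable_const _),
    integral_indicator (by measurability)]
  have : P.toMeasure.real {j} = pReal P j := by
    simp [Measure.real, pReal, PMF.toMeasure_apply_singleton]
  simp only [integral_const, measureReal_restrict_apply_univ, this, probReal_univ, smul_eq_mul]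
  ring

lemma qs_singleton (P : PMF ℕ) (n k j : ℕ) :
    qs P n {k} j = (n.choose k) * pReal P j ^ k * (1 - pReal P j) ^ (n - k) := by
  induction n generalizing k with
  | zero =>
    cases k with
    | zero => simp [qs, Ec_zero]
    | succ k => simp [qs, Ec_zero]
  | succ n ih =>
    unfold qs
    rw [Ec_succ P n _ (ind_bdd _ j)]
    cases k with
    | zero =>
      have : ∀ m : ℕ, Ec P n (fun y => ({0} : Set ℕ).indicator (1 : ℕ → ℝ) ((y + Pi.single m 1 : ℕ → ℕ) j)) =
          if m = j then 0 else qs P n {0} j := by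
        intro m
        by_cases h : m = j
        · subst h; simp [Ec]
        · simp [h, Ec, qs, Pi.single_apply, Ne.symm h]
      simp only [this, integral_ite_P, ih]
      simp
      ring
    | succ k =>
      have : ∀ m : ℕ, Ec P n (fun y => ({k+1} : Set ℕ).indicator (1 : ℕ → ℝ) ((y + Pi.single m 1 : ℕ → ℕ) j)) =
          if m = j then qs P n {k} j else qs P n {k+1} j := by
        intro m
        by_cases h : m = j
        · subst h; simp [Ec, qs, Set.indicator_apply]
        · simp [h, Ec, qs, Pi.single_apply, Ne.symm h]
      simp only [this, integral_ite_P, ih]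
      rw [Nat.choose_succ_succ, Nat.succ_sub_succ]
      push_cast
      rcases Nat.lt_or_ge n (k+1) with h | h
      · rw [Nat.choose_eq_zero_of_lt h]
        push_cast; ring
      · obtain ⟨d, rfl⟩ := Nat.exists_eq_add_of_le h
        have e2 : k + 1 + d - k = d + 1 := by omega
        have e3 : k + 1 + d - (k+1) = d := by omega
        rw [e2, e3]
        ring

/-! ### Tail bounds -/

lemma exp_neg_le_quad {u : ℝ} (hu : 0 ≤ u) : Real.exp (-u) ≤ 1 - u + u ^ 2 / 2 := by
  have h := Real.quadratic_le_exp_of_nonneg hu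
  have h1 : Real.exp (-u) * Real.exp u = 1 := by rw [← Real.exp_add]; simp
  have h2 : 0 < 1 - u + u ^ 2 / 2 := by nlinarith [sq_nonneg (u - 1)]
  have h3 : 1 ≤ (1 - u + u ^ 2 / 2) * Real.exp u := by
    have := mul_le_mul_of_nonneg_left h h2.le
    nlinarith [sq_nonneg (u ^ 2)]
  have h4 := Real.exp_pos u
  by_contra hc
  push Not at hc
  nlinarith [mul_lt_mul_of_pos_right hc h4]

lemma exp_le_cubic {u : ℝ} (hu : 0 ≤ u) (hu1 : u ≤ 1) :
    Real.exp u ≤ 1 + u + u ^ 2 / 2 + u ^ 3 / 2 := by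
  have h := Real.exp_bound' hu hu1 (n := 3) (by norm_num)
  simp [Finset.sum_range_succ, Nat.factorial] at h
  have : 0 ≤ u ^ 3 := by positivity
  linarith

lemma ind_nonneg (s : Set ℕ) (m : ℕ) : 0 ≤ s.indicator (1 : ℕ → ℝ) m :=
  Set.indicator_nonneg (fun _ _ => zero_le_one) _

lemma lower_tail (P : PMF ℕ) (n : ℕ) (s : Set ℕ) (hs : IsUpperSet s ∨ IsLowerSet s)
    (w : ℕ → ℝ) (hw : ∀ j, 0 ≤ w j)
    (hsum : ∀ ω : Fin n → ℕ, Summable fun j => w j * s.indicator (1 : ℕ → ℝ) (freq ω j))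
    (h1 : Summable fun j => w j * qs P n s j) (h2 : Summable fun j => w j ^ 2 * qs P n s j)
    (v : ℝ) (hv : 0 < v) (hle : ∑' j, w j ^ 2 * qs P n s j ≤ v) (x : ℝ) (hx : 0 < x) :
    (sampleMeasure P n).real {ω | ∑' j, w j * s.indicator (1 : ℕ → ℝ) (freq ω j) ≤
      ∑' j, w j * qs P n s j - Real.sqrt (2 * v * x)} ≤ Real.exp (-x) := by
  set l : ℝ := Real.sqrt (2 * x / v) with hl
  have hl0 : 0 ≤ l := Real.sqrt_nonneg _
  set W : (Fin n → ℕ) → ℝ := fun ω => ∑' j, w j * s.indicator (1 : ℕ → ℝ) (freq ω j) with hW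
  set m := ∑' j, w j * qs P n s j with hm
  have hnn : ∀ (ω : Fin n → ℕ) j, 0 ≤ w j * s.indicator (1 : ℕ → ℝ) (freq ω j) :=
    fun ω j => mul_nonneg (hw j) (ind_nonneg _ _)
  have hW0 : ∀ ω, 0 ≤ W ω := fun ω => tsum_nonneg (hnn ω)
  have hint : Integrable (fun ω => Real.exp (-l * W ω)) (sampleMeasure P n) := by
    refine integrable_of_bdd P _ 1 fun ω => ?_
    rw [abs_of_pos (Real.exp_pos _), Real.exp_le_one_iff]
    nlinarith [hW0 ω, mul_nonneg hl0 (hW0 ω)]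
  have hN : ∀ N : ℕ, mgf W (sampleMeasure P n) (-l) ≤
      Real.exp (-l * (∑ j ∈ Finset.range N, w j * qs P n s j) + l ^ 2 / 2 * v) := by
    intro N
    have hf := mgf_finite P n s (fun j => -(l * w j))
      (by
        have : ∀ j, -(l * w j) ≤ 0 := fun j => by
          have := mul_nonneg hl0 (hw j)
          linarith
        rcases hs with h | h
        · exact Or.inr (Or.inl ⟨this, h⟩)
        · exact Or.inr (Or.inr ⟨this, h⟩)) (Finset.range N)
    have hm1 : mgf W (sampleMeasure P n) (-l) ≤
        Ec P n (fun y => Real.exp (∑ j ∈ Finset.range N, -(l * w j) * s.indicator 1 (y j))) := by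
      unfold mgf Ec
      refine integral_mono hint ?_ ?_
      · refine integrable_of_bdd P _ 1 fun ω => ?_
        rw [abs_of_pos (Real.exp_pos _), Real.exp_le_one_iff]
        refine Finset.sum_nonpos fun j _ => ?_
        nlinarith [mul_nonneg hl0 (hnn ω j)]
      · intro ω
        refine Real.exp_le_exp.2 ?_
        have a1 : ∑ j ∈ Finset.range N, w j * s.indicator (1 : ℕ → ℝ) (freq ω j) ≤ W ω :=
          (hsum ω).sum_le_tsum _ fun j _ => hnn ω j
        have a2 : ∑ j ∈ Finset.range N, -(l * w j) * s.indicator (1 : ℕ → ℝ) (freq ω j) =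
            -l * ∑ j ∈ Finset.range N, w j * s.indicator (1 : ℕ → ℝ) (freq ω j) := by
          rw [Finset.mul_sum]
          exact Finset.sum_congr rfl fun j _ => by ring
        rw [a2]
        nlinarith [mul_le_mul_of_nonneg_left a1 hl0]
    refine hm1.trans (hf.trans (Real.exp_le_exp.2 ?_))
    have b1 : ∑ j ∈ Finset.range N, w j ^ 2 * qs P n s j ≤ v :=
      (h2.sum_le_tsum _ fun j _ => mul_nonneg (sq_nonneg _) (qs_nonneg _ _ _ _)).trans hle
    have b2 : ∑ j ∈ Finset.range N, (Real.exp (-(l * w j)) - 1) * qs P n s j ≤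
        ∑ j ∈ Finset.range N, (-l * (w j * qs P n s j) + l ^ 2 / 2 * (w j ^ 2 * qs P n s j)) := by
      refine Finset.sum_le_sum fun j _ => ?_
      have c1 := exp_neg_le_quad (mul_nonneg hl0 (hw j))
      have c2 := qs_nonneg P n s j
      have c3 : Real.exp (-(l * w j)) - 1 ≤ -(l * w j) + (l * w j) ^ 2 / 2 := by linarith
      have := mul_le_mul_of_nonneg_right c3 c2
      refine this.trans (le_of_eq (by ring))
    rw [Finset.sum_add_distrib, ← Finset.mul_sum, ← Finset.mul_sum] at b2
    have b3 : l ^ 2 / 2 * ∑ j ∈ Finset.range N, w j ^ 2 * qs P n s j ≤ l ^ 2 / 2 * v :=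
      mul_le_mul_of_nonneg_left b1 (by positivity)
    linarith
  have hlim : mgf W (sampleMeasure P n) (-l) ≤ Real.exp (-l * m + l ^ 2 / 2 * v) := by
    refine ge_of_tendsto' (x := atTop) (b := mgf W (sampleMeasure P n) (-l)) ?_ hN
    exact (Real.continuous_exp.tendsto _).comp
      ((h1.hasSum.tendsto_sum_nat.const_mul (-l)).add_const _)
  have hc := measure_le_le_exp_mul_mgf (μ := sampleMeasure P n) (X := W)
    (m - Real.sqrt (2 * v * x)) (t := -l) (by linarith) hint
  refine hc.trans ?_
  refine (mul_le_mul_of_nonneg_left hlim (Real.exp_pos _).le).trans ?_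
  rw [← Real.exp_add]
  refine Real.exp_le_exp.2 (le_of_eq ?_)
  have d1 : l ^ 2 = 2 * x / v := Real.sq_sqrt (by positivity)
  have d2 : l * Real.sqrt (2 * v * x) = 2 * x := by
    rw [hl, ← Real.sqrt_mul (by positivity)]
    have : 2 * x / v * (2 * v * x) = (2 * x) ^ 2 := by field_simp
    rw [this, Real.sqrt_sq (by positivity)]
  have d3 : l ^ 2 / 2 * v = x := by rw [d1]; field_simp
  rw [d3]
  linear_combination -d2

lemma sum_ind_le {n : ℕ} (ω : Fin n → ℕ) (r : ℕ) (hr : 1 ≤ r) (S : Finset ℕ) :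
    ∑ j ∈ S, (Set.Ici r).indicator (1 : ℕ → ℝ) (freq ω j) ≤ n := by
  have h1 : ∑ j ∈ S, (Set.Ici r).indicator (1 : ℕ → ℝ) (freq ω j) ≤ ∑ j ∈ S, (freq ω j : ℝ) := by
    refine Finset.sum_le_sum fun j _ => ?_
    by_cases h : r ≤ freq ω j
    · simp only [Set.mem_Ici, h, Set.indicator_of_mem, Pi.one_apply]
      exact_mod_cast hr.trans h
    · simp [h]
  refine h1.trans ?_
  have h2 : ∑ j ∈ S, freq ω j ≤ n := by
    simp only [freq, Finset.card_filter]
    rw [Finset.sum_comm]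
    calc _ ≤ ∑ i : Fin n, 1 := Finset.sum_le_sum fun i _ => by
            rw [Finset.sum_ite_eq]; split_ifs <;> simp
      _ = n := by simp
  exact_mod_cast h2

lemma ind_summable {n : ℕ} (ω : Fin n → ℕ) (r : ℕ) (hr : 1 ≤ r) :
    Summable fun j => (Set.Ici r).indicator (1 : ℕ → ℝ) (freq ω j) :=
  summable_of_sum_le (fun j => ind_nonneg _ _) (sum_ind_le ω r hr)

lemma qs_summable (P : PMF ℕ) (n r : ℕ) (hr : 1 ≤ r) :
    Summable fun j => qs P n (Set.Ici r) j := by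
  refine summable_of_sum_le (c := n) (fun j => qs_nonneg _ _ _ _) fun S => ?_
  unfold qs Ec
  rw [← integral_finsetSum _ fun j _ => (ind_bdd (Set.Ici r) j).integrable P n]
  have := integral_mono (μ := sampleMeasure P n)
    (integrable_finsetSum S fun j _ => (ind_bdd (Set.Ici r) j).integrable P n)
    (integrable_const (n : ℝ)) (fun ω => by simpa using sum_ind_le ω r hr S)
  simpa using this

lemma upper_tail (P : PMF ℕ) (n r : ℕ) (hr : 1 ≤ r) (V : ℝ)
    (hV : V = ∑' j, qs P n (Set.Ici r) j) (hV0 : 0 < V) (x : ℝ) (hx : 0 < x) :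
    (sampleMeasure P n).real {ω | V + Real.sqrt (2 * V * x) + x ≤
      ∑' j, (Set.Ici r).indicator (1 : ℕ → ℝ) (freq ω j)} ≤ Real.exp (-x) := by
  set W : (Fin n → ℕ) → ℝ := fun ω => ∑' j, (Set.Ici r).indicator (1 : ℕ → ℝ) (freq ω j) with hW
  have hWn : ∀ ω, W ω ≤ n := fun ω =>
    Real.tsum_le_of_sum_le (fun j => ind_nonneg _ _) (sum_ind_le ω r hr)
  have hmgf : ∀ l : ℝ, 0 ≤ l → Integrable (fun ω => Real.exp (l * W ω)) (sampleMeasure P n) ∧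
      mgf W (sampleMeasure P n) l ≤ Real.exp ((Real.exp l - 1) * V) := by
    intro l hl
    refine ⟨integrable_of_bdd P _ (Real.exp (l * n)) fun ω => ?_, ?_⟩
    · rw [abs_of_pos (Real.exp_pos _)]
      exact Real.exp_le_exp.2 (mul_le_mul_of_nonneg_left (hWn ω) hl)
    have hlim : Tendsto (fun N : ℕ => ∫ ω : Fin n → ℕ, Real.exp (∑ j ∈ Finset.range N,
        l * (Set.Ici r).indicator (1 : ℕ → ℝ) (freq ω j)) ∂(sampleMeasure P n)) atTop
        (nhds (mgf W (sampleMeasure P n) l)) := by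
      unfold mgf
      refine tendsto_integral_of_dominated_convergence (fun _ => Real.exp (l * n))
        (fun N => (Measurable.of_discrete).aestronglyMeasurable) (integrable_const _) ?_ ?_
      · intro N
        refine Eventually.of_forall fun ω => ?_
        rw [Real.norm_eq_abs, abs_of_pos (Real.exp_pos _), ← Finset.mul_sum]
        exact Real.exp_le_exp.2 (mul_le_mul_of_nonneg_left (sum_ind_le ω r hr _) hl)
      · refine Eventually.of_forall fun ω => ?_
        simp only [← Finset.mul_sum]
        exact (Real.continuous_exp.tendsto _).comp
          ((ind_summable ω r hr).hasSum.tendsto_sum_nat.const_mul l)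
    refine le_of_tendsto' hlim fun N => ?_
    refine (mgf_finite P n (Set.Ici r) (fun _ => l) (Or.inl ⟨fun _ => hl, isUpperSet_Ici r⟩)
      (Finset.range N)).trans (Real.exp_le_exp.2 ?_)
    rw [← Finset.mul_sum]
    refine mul_le_mul_of_nonneg_left ?_ (by linarith [Real.add_one_le_exp l])
    rw [hV]
    exact (qs_summable P n r hr).sum_le_tsum _ fun j _ => qs_nonneg _ _ _ _
  have hch : ∀ l : ℝ, 0 ≤ l →
      (Real.exp l - 1) * V - l * (V + Real.sqrt (2 * V * x) + x) ≤ -x →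
      (sampleMeasure P n).real {ω | V + Real.sqrt (2 * V * x) + x ≤ W ω} ≤ Real.exp (-x) := by
    intro l hl h
    obtain ⟨i1, i2⟩ := hmgf l hl
    refine (measure_ge_le_exp_mul_mgf _ hl i1).trans ?_
    refine (mul_le_mul_of_nonneg_left i2 (Real.exp_pos _).le).trans ?_
    rw [← Real.exp_add]
    refine Real.exp_le_exp.2 ?_
    linarith
  rcases le_total (2 * x) V with h | h
  · set l := Real.sqrt (2 * x / V) with hl
    have hl0 : 0 ≤ l := Real.sqrt_nonneg _
    have hl1 : l ≤ 1 := by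
      rw [hl, Real.sqrt_le_one]
      exact (div_le_one hV0).2 h
    refine hch l hl0 ?_
    have d1 : l ^ 2 = 2 * x / V := Real.sq_sqrt (by positivity)
    have d2 : l * Real.sqrt (2 * V * x) = 2 * x := by
      rw [hl, ← Real.sqrt_mul (by positivity)]
      have : 2 * x / V * (2 * V * x) = (2 * x) ^ 2 := by field_simp
      rw [this, Real.sqrt_sq (by positivity)]
    have d3 : l ^ 2 * V = 2 * x := by rw [d1]; field_simp
    have e1 := mul_le_mul_of_nonneg_right (exp_le_cubic hl0 hl1) hV0.le
    have e2 : l ^ 3 * V = 2 * x * l := by rw [pow_succ, mul_right_comm, d3]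
    nlinarith
  · refine hch 1 zero_le_one ?_
    have e1 := exp_le_cubic zero_le_one (le_refl (1 : ℝ))
    have e2 : V ≤ Real.sqrt (2 * V * x) := by
      refine Real.le_sqrt_of_sq_le ?_
      nlinarith
    nlinarith

/-! ### Deterministic part -/

lemma final_numeric (a b d C C' V V' A m θ x r : ℝ) (ha : 0 < a) (hb : 0 < b) (hd : 0 < d)
    (hC : 0 ≤ C) (hV : 0 ≤ V) (hx : 0 < x) (hr : 0 ≤ r)
    (h1 : C ≤ V + Real.sqrt (2 * V * x) + x) (h2 : V' - Real.sqrt (2 * V * x) ≤ C')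
    (h3 : V - Real.sqrt (2 * V * x) ≤ C) (h4 : m - Real.sqrt (2 * (V / a) * x) ≤ θ)
    (h5 : V - V' = b * A) (h6 : A - r / d * V ≤ m) :
    (C - C') / b - (Real.sqrt (2 / a) + 2 * Real.sqrt 2 / b) * Real.sqrt (C * x)
      - (4 / Real.sqrt a + (26 / 3) / b + 16 * r / d) * x - (2 * r / d) * C ≤ θ := by
  have e1 : Real.sqrt (2 * V * x) = Real.sqrt 2 * Real.sqrt V * Real.sqrt x := by
    rw [Real.sqrt_mul (by positivity), Real.sqrt_mul (by positivity)]
  have e2 : Real.sqrt (2 * (V / a) * x) = Real.sqrt 2 * Real.sqrt V * Real.sqrt x / Real.sqrt a := by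
    rw [Real.sqrt_mul (by positivity), Real.sqrt_mul (by positivity), Real.sqrt_div hV]
    ring
  have e3 : Real.sqrt (2 / a) = Real.sqrt 2 / Real.sqrt a := Real.sqrt_div (by norm_num) _
  have e4 : Real.sqrt (C * x) = Real.sqrt C * Real.sqrt x := Real.sqrt_mul hC _
  rw [e1] at h1 h2 h3
  rw [e2] at h4
  rw [e3, e4]
  have hα : 0 < Real.sqrt a := Real.sqrt_pos.2 ha
  have ht2 : Real.sqrt 2 ^ 2 = 2 := Real.sq_sqrt (by norm_num)
  have ht0 : 0 ≤ Real.sqrt 2 := Real.sqrt_nonneg _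
  have hs2 : Real.sqrt x ^ 2 = x := Real.sq_sqrt hx.le
  have hs0 : 0 ≤ Real.sqrt x := Real.sqrt_nonneg _
  have hc2 : Real.sqrt C ^ 2 = C := Real.sq_sqrt hC
  have hc0 : 0 ≤ Real.sqrt C := Real.sqrt_nonneg _
  have hu2 : Real.sqrt V ^ 2 = V := Real.sq_sqrt hV
  have hu0 : 0 ≤ Real.sqrt V := Real.sqrt_nonneg _
  generalize Real.sqrt 2 = t at *
  generalize Real.sqrt x = s at *
  generalize Real.sqrt C = c at *
  generalize Real.sqrt V = u at *
  generalize Real.sqrt a = α at *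
  have hts : 0 ≤ t * s := mul_nonneg ht0 hs0
  have hu : u ≤ c + t * s := by
    by_contra hcon
    push Not at hcon
    have k1 : c < u := by linarith
    have k2 : c < u - t * s := by linarith
    have k3 := mul_lt_mul'' k1 k2 hc0 hc0
    nlinarith
  have f1 : t * u * s ≤ t * (c * s) + 2 * x := by
    have := mul_le_mul_of_nonneg_left hu hts
    have k : t * s * (t * s) = 2 * x := by rw [← ht2, ← hs2]; ring
    nlinarith
  have f2 : V ≤ 2 * C + 4 * x := by
    have k : (t * s) ^ 2 = 2 * x := by rw [← ht2, ← hs2]; ring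
    have k2 : u ^ 2 ≤ (c + t * s) ^ 2 := pow_le_pow_left₀ hu0 hu 2
    nlinarith [sq_nonneg (c - t * s)]
  have g1 : t * u * s / α ≤ (t * (c * s) + 2 * x) / α := by gcongr
  have g2 : (C - C') / b ≤ A + (2 * (t * (c * s)) + 5 * x) / b := by
    rw [div_le_iff₀ hb, add_mul, div_mul_cancel₀ _ hb.ne']
    nlinarith
  have g3 : r / d * V ≤ r / d * (2 * C + 4 * x) :=
    mul_le_mul_of_nonneg_left f2 (by positivity)
  have p1 : 0 ≤ x / α := by positivity
  have p2 : 0 ≤ x / b := by positivity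
  have p3 : 0 ≤ r / d * x := by positivity
  have q : (t / α + 2 * t / b) * (c * s) + (4 / α + 26 / 3 / b + 16 * r / d) * x + 2 * r / d * C
      = (t * (c * s) + 2 * x) / α + 2 * (x / α) + (2 * (t * (c * s)) + 5 * x) / b
        + (11 / 3) * (x / b) + r / d * (2 * C + 4 * x) + 12 * (r / d * x) := by
    ring
  linarith

lemma pReal_nonneg (P : PMF ℕ) (j : ℕ) : 0 ≤ pReal P j := ENNReal.toReal_nonneg

lemma pReal_le_one (P : PMF ℕ) (j : ℕ) : pReal P j ≤ 1 := by
  have := ENNReal.toReal_mono ENNReal.one_ne_top (P.coe_le_one j)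
  simpa [pReal] using this

lemma pReal_summable (P : PMF ℕ) : Summable (pReal P) :=
  ENNReal.summable_toReal P.tsum_coe_ne_top

lemma qs_mono (P : PMF ℕ) (n : ℕ) {s t : Set ℕ} (h : s ⊆ t) (j : ℕ) :
    qs P n s j ≤ qs P n t j :=
  Ec_mono P n (ind_bdd s j) (ind_bdd t j) fun _ =>
    Set.indicator_le_indicator_of_subset h (fun _ => zero_le_one) _

lemma qs_split (P : PMF ℕ) (n r j : ℕ) :
    qs P n (Set.Ici r) j = qs P n {r} j + qs P n (Set.Ici (r+1)) j := by
  unfold qs Ec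
  rw [← integral_add ((ind_bdd {r} j).integrable P n) ((ind_bdd (Set.Ici (r+1)) j).integrable P n)]
  congr 1
  funext ω
  rcases lt_trichotomy (freq ω j) r with h | h | h
  · have h1 : ¬ r ≤ freq ω j := by omega
    have h2 : ¬ r + 1 ≤ freq ω j := by omega
    simp [h.ne, h1, h2]
  · simp [h]
  · have h1 : r ≤ freq ω j := by omega
    have h2 : r + 1 ≤ freq ω j := by omega
    simp [h.ne', h1, h2]

lemma Ccount_eq {n : ℕ} (ω : Fin n → ℕ) (r : ℕ) :
    Ccount ω r = ∑' j, (Set.Ici r).indicator (1 : ℕ → ℝ) (freq ω j) := by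
  unfold Ccount
  exact tsum_congr fun j => by simp [Set.indicator_apply]

lemma Mcount_eq {n : ℕ} (ω : Fin n → ℕ) (r : ℕ) (hr : 1 ≤ r) :
    Mcount ω r = Ccount ω r - Ccount ω (r+1) := by
  rw [Ccount_eq, Ccount_eq,
    ← (ind_summable ω r hr).tsum_sub (ind_summable ω (r+1) (by omega))]
  unfold Mcount
  refine tsum_congr fun j => ?_
  rcases lt_trichotomy (freq ω j) r with h | h | h
  · have h1 : ¬ r ≤ freq ω j := by omega
    have h2 : ¬ r + 1 ≤ freq ω j := by omega
    simp [h.ne, Set.indicator_apply, h1, h2]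
  · simp [h, Set.indicator_apply]
  · have h1 : r ≤ freq ω j := by omega
    have h2 : r + 1 ≤ freq ω j := by omega
    simp [h.ne', Set.indicator_apply, h1, h2]

lemma missingMass_eq {n : ℕ} (P : PMF ℕ) (ω : Fin n → ℕ) (r : ℕ) :
    missingMass (pReal P) r ω =
      ∑' j, pReal P j ^ r * ({0} : Set ℕ).indicator (1 : ℕ → ℝ) (freq ω j) := by
  unfold missingMass
  exact tsum_congr fun j => by simp [Set.indicator_apply]

/-- Lower confidence bound for the `r`-order missing mass: with probability at least
`1 - 6 e^{-x}`, we have `θ_r(P;X_n) ≥ max(0, 𝔏_{n,r}(x))`. -/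
theorem missingMass_confidence_lower (P : PMF ℕ) (r n : ℕ) (hr : 1 ≤ r) (hn : 2 * r < n)
    (x : ℝ) (hx : 0 < x) :
    1 - ENNReal.ofReal (6 * Real.exp (-x)) ≤
      sampleMeasure P n
        {ω | max 0 (Lbound r x ω) ≤ missingMass (pReal P) r ω} := by
  set p := pReal P with hp
  have hp0 : ∀ j, 0 ≤ p j := pReal_nonneg P
  have hp1 : ∀ j, p j ≤ 1 := pReal_le_one P
  have hps : Summable p := pReal_summable P
  have hp1' : ∀ j, 0 ≤ 1 - p j := fun j => by linarith [hp1 j]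
  have hp1'' : ∀ j, 1 - p j ≤ 1 := fun j => by linarith [hp0 j]
  set V := ∑' j, qs P n (Set.Ici r) j with hV
  set V' := ∑' j, qs P n (Set.Ici (r+1)) j with hV'
  have sV := qs_summable P n r hr
  have sV' := qs_summable P n (r+1) (by omega)
  have sk : ∀ k, r ≤ k → Summable fun j => qs P n {k} j := fun k hk =>
    Summable.of_nonneg_of_le (fun j => qs_nonneg _ _ _ _)
      (fun j => qs_mono P n (by simpa using hk) j) sV
  have lek : ∀ k, r ≤ k → ∑' j, qs P n {k} j ≤ V := fun k hk =>
    (sk k hk).tsum_le_tsum (fun j => qs_mono P n (by simpa using hk) j) sV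
  have ha : (0 : ℝ) < n.choose (2 * r) := by exact_mod_cast Nat.choose_pos (by omega)
  have hb : (0 : ℝ) < n.choose r := by exact_mod_cast Nat.choose_pos (by omega)
  have hd : (0 : ℝ) < n.choose (r + 1) := by exact_mod_cast Nat.choose_pos (by omega)
  have hVpos : 0 < V := by
    obtain ⟨j, hj⟩ : ∃ j, 0 < p j := by
      obtain ⟨j, hj⟩ := P.support_nonempty
      exact ⟨j, ENNReal.toReal_pos ((P.mem_support_iff j).1 hj) (P.apply_ne_top j)⟩
    have h1 : 0 < qs P n {n} j := by
      rw [qs_singleton]; simp only [Nat.choose_self, Nat.sub_self, pow_zero]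
      have := pow_pos hj n
      simpa using this
    have h2 : qs P n {n} j ≤ qs P n (Set.Ici r) j :=
      qs_mono P n (by simp only [Set.singleton_subset_iff, Set.mem_Ici]; omega) j
    exact (h1.trans_le h2).trans_le (sV.le_tsum j fun i _ => qs_nonneg _ _ _ _)
  have hVV : V' ≤ V :=
    sV'.tsum_le_tsum (fun j => qs_mono P n (Set.Ici_subset_Ici.2 (by omega)) j) sV
  -- summability of powers
  have spow : ∀ k m : ℕ, 1 ≤ k → Summable fun j => p j ^ k * (1 - p j) ^ m := by
    intro k m hk
    refine Summable.of_nonneg_of_le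
      (fun j => mul_nonneg (pow_nonneg (hp0 j) _) (pow_nonneg (hp1' j) _)) (fun j => ?_) hps
    calc p j ^ k * (1 - p j) ^ m ≤ p j ^ k * 1 :=
          mul_le_mul_of_nonneg_left (pow_le_one₀ (hp1' j) (hp1'' j)) (pow_nonneg (hp0 j) _)
      _ ≤ p j := by
          rw [mul_one]
          exact pow_le_of_le_one (hp0 j) (hp1 j) (by omega)
  have q0 : ∀ j, qs P n {0} j = (1 - p j) ^ n := fun j => by
    rw [qs_singleton]; simp [hp]
  set A := ∑' j, p j ^ r * (1 - p j) ^ (n - r) with hA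
  have h5 : V - V' = (n.choose r) * A := by
    rw [hV, hV', ← sV.tsum_sub sV', hA, ← tsum_mul_left]
    refine tsum_congr fun j => ?_
    rw [qs_split, qs_singleton]; ring
  have h6 : A - r / (n.choose (r+1)) * V ≤ ∑' j, p j ^ r * qs P n {0} j := by
    have s1 : ∑' j, p j ^ r * qs P n {0} j = ∑' j, p j ^ r * (1 - p j) ^ n := by
      simp only [q0]
    rw [s1]
    have s2 : A ≤ ∑' j, (p j ^ r * (1 - p j) ^ n + r / (n.choose (r+1)) * qs P n {r+1} j) := by
      refine (spow r (n - r) hr).tsum_le_tsum (fun j => ?_)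
        ((spow r n hr).add ((sk (r+1) (by omega)).mul_left _))
      rw [qs_singleton]
      obtain ⟨d, rfl⟩ : ∃ d, n = r + (d + 1) := ⟨n - r - 1, by omega⟩
      have k1 : r + (d + 1) - r = d + 1 := by omega
      have k2 : r + (d + 1) - (r + 1) = d := by omega
      rw [k1, k2]
      have k3 : (r : ℝ) / ((r + (d+1)).choose (r+1)) *
          (((r + (d+1)).choose (r+1)) * pReal P j ^ (r+1) * (1 - pReal P j) ^ d)
          = r * p j ^ (r+1) * (1 - p j) ^ d := by
        field_simp; rfl
      rw [k3]
      have k4 : 1 - r * p j ≤ (1 - p j) ^ r := by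
        have := one_add_mul_le_pow (a := - p j) (by linarith [hp1 j]) r
        have e : (1 + - p j) = 1 - p j := by ring
        rw [e] at this
        linarith
      have k5 : 0 ≤ p j ^ r * (1 - p j) ^ d :=
        mul_nonneg (pow_nonneg (hp0 j) _) (pow_nonneg (hp1' j) _)
      have k6 : 0 ≤ p j ^ r * (1 - p j) ^ (d+1) :=
        mul_nonneg (pow_nonneg (hp0 j) _) (pow_nonneg (hp1' j) _)
      have k7 := mul_le_mul_of_nonneg_left k4 k6
      have k8 : p j ^ r * (1 - p j) ^ (r + (d+1)) =
          p j ^ r * (1 - p j) ^ (d+1) * (1 - p j) ^ r := by ring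
      have k9 : 0 ≤ (r : ℝ) * p j * p j * (p j ^ r * (1 - p j) ^ d) :=
        mul_nonneg (mul_nonneg (mul_nonneg (Nat.cast_nonneg _) (hp0 j)) (hp0 j)) k5
      rw [k8]
      have k10 : (r : ℝ) * p j ^ (r+1) * (1 - p j) ^ d =
        p j ^ r * (1 - p j) ^ (d+1) * (r * p j) + r * p j * p j * (p j ^ r * (1 - p j) ^ d) := by
        ring
      rw [k10]
      linarith
    rw [(spow r n hr).tsum_add ((sk (r+1) (by omega)).mul_left _), tsum_mul_left] at s2
    have s3 := mul_le_mul_of_nonneg_left (lek (r+1) (by omega))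
      (show (0:ℝ) ≤ r / (n.choose (r+1)) by positivity)
    linarith
  have h7 : ∑' j, (p j ^ r) ^ 2 * qs P n {0} j ≤ V / (n.choose (2 * r)) := by
    rw [le_div_iff₀ ha, ← tsum_mul_right]
    refine le_trans (Summable.tsum_le_tsum (fun j => ?_) ?_ (sk (2*r) (by omega)))
      (lek (2 * r) (by omega))
    · rw [q0, qs_singleton, ← pow_mul, mul_comm r 2]
      have : (1 - p j) ^ n ≤ (1 - p j) ^ (n - 2 * r) :=
        pow_le_pow_of_le_one (hp1' j) (hp1'' j) (by omega)
      have k := mul_le_mul_of_nonneg_left this (mul_nonneg ha.le (pow_nonneg (hp0 j) (2*r)))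
      calc _ = (n.choose (2 * r)) * p j ^ (2 * r) * (1 - p j) ^ n := by ring
        _ ≤ _ := k
    · simp only [q0, ← pow_mul]
      exact (spow (r*2) n (by omega)).mul_right _
  -- tail events
  have T1 := upper_tail P n r hr V hV hVpos x hx
  have T2 := lower_tail P n (Set.Ici r) (Or.inl (isUpperSet_Ici r)) (fun _ => 1)
    (fun _ => zero_le_one) (fun ω => by simpa using ind_summable ω r hr)
    (by simpa using sV) (by simpa using sV) V hVpos (by simp [hV]) x hx
  have T3 := lower_tail P n (Set.Ici (r+1)) (Or.inl (isUpperSet_Ici (r+1))) (fun _ => 1)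
    (fun _ => zero_le_one) (fun ω => by simpa using ind_summable ω (r+1) (by omega))
    (by simpa using sV') (by simpa using sV') V hVpos (by simpa using hVV) x hx
  have T4 := lower_tail P n {0} (Or.inr (by
      intro a b hab ha
      simp only [Set.mem_singleton_iff] at ha ⊢
      omega)) (fun j => p j ^ r)
    (fun j => pow_nonneg (hp0 j) _) (fun ω => by
      refine Summable.of_nonneg_of_le
        (fun j => mul_nonneg (pow_nonneg (hp0 j) _) (ind_nonneg _ _)) (fun j => ?_)
        (spow r 0 hr)
      refine mul_le_mul_of_nonneg_left ?_ (pow_nonneg (hp0 j) _)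
      by_cases h : freq ω j = 0 <;> simp [h])
    (by simpa only [q0] using spow r n hr)
    (by
      simp only [q0, ← pow_mul]
      exact spow (r*2) n (by omega)) (V / (n.choose (2 * r))) (by positivity) h7 x hx
  simp only [one_mul, ← Ccount_eq] at T1 T2 T3
  simp only [hp, ← missingMass_eq] at T4
  rw [← hV] at T2
  rw [← hV'] at T3
  set μ := sampleMeasure P n with hμ
  set G := {ω : Fin n → ℕ | max 0 (Lbound r x ω) ≤ missingMass (pReal P) r ω} with hG
  set E1 := {ω : Fin n → ℕ | V + Real.sqrt (2 * V * x) + x ≤ Ccount ω r}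
  set E2 := {ω : Fin n → ℕ | Ccount ω r ≤ V - Real.sqrt (2 * V * x)}
  set E3 := {ω : Fin n → ℕ | Ccount ω (r+1) ≤ V' - Real.sqrt (2 * V * x)}
  set E4 := {ω : Fin n → ℕ | missingMass (pReal P) r ω ≤ ∑' j, pReal P j ^ r * qs P n {0} j -
    Real.sqrt (2 * (V / (n.choose (2 * r))) * x)}
  have hsub : Gᶜ ⊆ (E1 ∪ E2) ∪ (E3 ∪ E4) := by
    intro ω hω
    by_contra hcon
    simp only [Set.mem_union, not_or] at hcon
    obtain ⟨⟨n1, n2⟩, n3, n4⟩ := hcon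
    simp only [E1, E2, E3, E4, Set.mem_setOf_eq, not_le] at n1 n2 n3 n4
    apply hω
    simp only [hG, Set.mem_setOf_eq]
    refine max_le ?_ ?_
    · rw [missingMass_eq]
      exact tsum_nonneg fun j => mul_nonneg (pow_nonneg (hp0 j) _) (ind_nonneg _ _)
    · have hC0 : 0 ≤ Ccount ω r := by
        rw [Ccount_eq]; exact tsum_nonneg fun j => ind_nonneg _ _
      have := final_numeric _ _ _ _ _ V V' A _ _ x r ha hb hd hC0 hVpos.le hx
        (Nat.cast_nonneg r) n1.le n3.le n2.le n4.le h5 h6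
      unfold Lbound gtEst
      rw [Mcount_eq ω r hr]
      exact this
  have hbad : μ.real Gᶜ ≤ 6 * Real.exp (-x) := by
    have u1 := measureReal_mono (μ := μ) hsub
    have u2 := measureReal_union_le (μ := μ) (E1 ∪ E2) (E3 ∪ E4)
    have u3 := measureReal_union_le (μ := μ) E1 E2
    have u4 := measureReal_union_le (μ := μ) E3 E4
    have := Real.exp_pos (-x)
    linarith
  have hGm : MeasurableSet G := MeasurableSet.of_discrete
  have h1 : μ Gᶜ ≤ ENNReal.ofReal (6 * Real.exp (-x)) := by
    rw [← ofReal_measureReal]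
    exact ENNReal.ofReal_le_ofReal hbad
  have h2 : μ G + μ Gᶜ = 1 := prob_add_prob_compl hGm
  rw [tsub_le_iff_right, ← h2]
  gcongr

end
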